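/- Let n ≥ 1, let G be a GOTE(4,n) tensor, let u, v ∈ ℝⁿ be unit vectors and set ρ = ⟨u,v⟩. On an auxiliary probability space let U be a standard Gaussian random variable, let V₁ and W be independent vectors of n independent standard Gaussians, set V₂ = ρV₁ + √(1−ρ²)·W (so that (V₁,V₂) is centered Gaussian with Cov(V₁ᵢ,V₁ⱼ) = Cov(V₂ᵢ,V₂ⱼ) = δ_{ij} and Cov(V₁ᵢ,V₂ⱼ) = ρδ_{ij}), and let Z be a GOE(n) matrix (a random real symmetric n×n matrix whose entries (Z_{ij})_{i ≤ j} are independent centered Gaussians with Var(Z_{ij}) = 1 for i < j and Var(Z_{ii}) = 2, and Z_{ji} = Z_{ij}), with U, (V₁,W), Z mutually independent. Then the law of the random symmetric matrix G·u⊗v equals the law of (1/√6)·U·(uvᵀ + vuᵀ) + (1/√6)·(V₁uᵀ + uV₁ᵀ + V₂vᵀ + vV₂ᵀ) + (1/√6)·√(1+ρ²)·Z. -/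

import Mathlib

open MeasureTheory ProbabilityTheory Filter

noncomputable section

/-- The size-`r` multiset of entries of a tuple `a : Fin r → Fin n`. -/
def tupleSym {n r : ℕ} (a : Fin r → Fin n) : Sym (Fin n) r :=
  ⟨(List.ofFn a : Multiset (Fin n)), by simp⟩

/-- `#Perm(a)`: the number of tuples with the same multiset of entries as `a`. -/
def permCount {n r : ℕ} (a : Fin r → Fin n) : ℕ :=
  (Finset.univ.filter (fun b : Fin r → Fin n => tupleSym b = tupleSym a)).card

/-- The sample space for a GOTE(r,n) tensor: one standard Gaussian coordinate for each
size-`r` multiset of indices. -/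
abbrev GoteSpace (r n : ℕ) : Type := Sym (Fin n) r → ℝ

/-- The law of the coordinates of a GOTE(r,n) tensor: a product of standard Gaussians. -/
def goteMeasure (r n : ℕ) : Measure (GoteSpace r n) :=
  Measure.pi fun _ => gaussianReal 0 1

instance (r n : ℕ) : IsProbabilityMeasure (goteMeasure r n) := by
  unfold goteMeasure; infer_instance

/-- The entries of the GOTE(r,n) tensor built from the Gaussian coordinates `ω`. -/
def gote {r n : ℕ} (ω : GoteSpace r n) (a : Fin r → Fin n) : ℝ :=
  Real.sqrt ((r : ℝ) / (permCount a : ℝ)) * ω (tupleSym a)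

/-- The index tuple `(i, j, f 0, …, f (r-3))`. -/
def glue {n r : ℕ} (i j : Fin n) (f : Fin (r - 2) → Fin n) : Fin r → Fin n :=
  fun t =>
    if h0 : (t : ℕ) = 0 then i
    else if h1 : (t : ℕ) = 1 then j
    else f ⟨(t : ℕ) - 2, by have := t.isLt; omega⟩

/-- The pure contraction `G ⬝ w^{⊗(r-2)}`, an `n × n` random symmetric matrix. -/
def pureContraction {r n : ℕ} (ω : GoteSpace r n) (w : Fin n → ℝ) :
    Matrix (Fin n) (Fin n) ℝ :=
  fun i j => ∑ f : Fin (r - 2) → Fin n, gote ω (glue i j f) * ∏ k, w (f k)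

open Classical in
/-- The eigenvalues (in some order) of a matrix, defined for symmetric matrices via the
spectral theorem and as `0` otherwise. -/
def eigsOf {n : ℕ} (A : Matrix (Fin n) (Fin n) ℝ) : Fin n → ℝ :=
  if h : A.IsHermitian then h.eigenvalues else 0

/-- The largest eigenvalue `λ₁` of a symmetric matrix. -/
def lambdaMax {n : ℕ} (A : Matrix (Fin n) (Fin n) ℝ) : ℝ := ⨆ i, eigsOf A i

/-- The smallest eigenvalue `λₙ` of a symmetric matrix. -/
def lambdaMin {n : ℕ} (A : Matrix (Fin n) (Fin n) ℝ) : ℝ := ⨅ i, eigsOf A i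

/-- The semicircle distribution with variance `σ²` (parameter `s = σ²`). -/
def semicircle (s : ℝ) : Measure ℝ :=
  volume.withDensity fun x => ENNReal.ofReal (Real.sqrt (4 * s - x ^ 2) / (2 * Real.pi * s))

end

/-- Index set for the upper-triangular entries of an `n × n` matrix. -/
abbrev UpperIdx (n : ℕ) : Type := {p : Fin n × Fin n // p.1 ≤ p.2}

/-- The law of the upper-triangular entries of a GOE(n) matrix: independent centered
Gaussians with variance `2` on the diagonal and `1` off the diagonal. -/
noncomputable def goeMeasure (n : ℕ) : Measure (UpperIdx n → ℝ) :=
  Measure.pi fun p => gaussianReal 0 (if p.1.1 = p.1.2 then 2 else 1)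

/-- The GOE(n) matrix built from its upper-triangular entries. -/
noncomputable def goeMatrix {n : ℕ} (z : UpperIdx n → ℝ) : Matrix (Fin n) (Fin n) ℝ :=
  fun i j => if h : i ≤ j then z ⟨(i, j), h⟩ else z ⟨(j, i), (not_le.mp h).le⟩

/-- The mixed contraction `G·u⊗v` of a GOTE(4,n) tensor: the `n × n` random symmetric
matrix with entries `(G·u⊗v)_{ij} = Σ_{a,b} G_{i,j,a,b} u_a v_b`. -/
noncomputable def mixedContraction {n : ℕ} (ω : GoteSpace 4 n) (u v : Fin n → ℝ) :
    Matrix (Fin n) (Fin n) ℝ :=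
  fun i j => ∑ a : Fin n, ∑ b : Fin n, gote ω ![i, j, a, b] * u a * v b

/-!
Both sides are linear images of independent Gaussians, so by the Cramér–Wold device it is enough
to match the variances of `L M` for every linear functional `L`; on symmetric matrices such an `L`
is `M ↦ tr (A M)` with `A` symmetric.

On the left, `tr (A (G·u⊗v))` pairs `G` with the tensor `T = A ⊗ u ⊗ v`. Grouping tuples by their
multiset of entries and averaging over permutations, the normalization `√(r/#Perm)` cancels the
orbit sizes and leaves the variance `(r/r!) ∑ₓ T x ∑_σ T (x ∘ σ)`; for `r = 4` the 24 permutations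
collapse to 12 distinct terms by the symmetry of `A`. On the right, the variances contributed by
`U`, `V₁`, `W` and `Z` add up by independence.
-/

section GaussianLaws

theorem map_eq_map_of_forall_dual {Ω Ω' E : Type*} [MeasurableSpace Ω] [MeasurableSpace Ω']
    [NormedAddCommGroup E] [NormedSpace ℝ E] [CompleteSpace E] [SecondCountableTopology E]
    [MeasurableSpace E] [BorelSpace E] {P : Measure Ω} {Q : Measure Ω'} [IsFiniteMeasure P]
    [IsFiniteMeasure Q] {X : Ω → E} {Y : Ω' → E} (hX : Measurable X) (hY : Measurable Y)
    (h : ∀ L : StrongDual ℝ E, P.map (L ∘ X) = Q.map (L ∘ Y)) : P.map X = Q.map Y := by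
  refine Measure.ext_of_charFunDual (funext fun L => ?_)
  rw [charFunDual_eq_charFun_map_one, charFunDual_eq_charFun_map_one,
    Measure.map_map (by fun_prop) hX, Measure.map_map (by fun_prop) hY, h L]

theorem hasLaw_const_mul_gaussianReal_toNNReal {Ω : Type*} [MeasurableSpace Ω] {P : Measure Ω}
    {X : Ω → ℝ} {s : ℝ} (hX : HasLaw X (gaussianReal 0 s.toNNReal) P) (c : ℝ) :
    HasLaw (fun ω => c * X ω) (gaussianReal 0 (c ^ 2 * s).toNNReal) P := by
  have hvar : (c ^ 2 * s).toNNReal = .mk (c ^ 2) (sq_nonneg c) * s.toNNReal := by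
    rw [Real.toNNReal_mul (sq_nonneg c), Real.toNNReal_of_nonneg (sq_nonneg c)]
  simpa only [hvar, mul_zero] using gaussianReal_const_mul hX c

theorem hasLaw_add_prod_gaussianReal_toNNReal {Ω Ω' : Type*} [MeasurableSpace Ω]
    [MeasurableSpace Ω'] {P : Measure Ω} {Q : Measure Ω'} {X : Ω → ℝ} {Y : Ω' → ℝ} {s t : ℝ}
    (hX : HasLaw X (gaussianReal 0 s.toNNReal) P) (hY : HasLaw Y (gaussianReal 0 t.toNNReal) Q)
    (hs : 0 ≤ s) (ht : 0 ≤ t) :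
    HasLaw (fun p => X p.1 + Y p.2) (gaussianReal 0 (s + t).toNNReal) (P.prod Q) := by
  have := hX.isProbabilityMeasure
  have := hY.isProbabilityMeasure
  have hsum := (indepFun_prod₀ hX.aemeasurable hY.aemeasurable).hasLaw_fun_add
    (hX.fun_comp measurePreserving_fst.hasLaw) (hY.fun_comp measurePreserving_snd.hasLaw)
  rwa [gaussianReal_conv_gaussianReal, add_zero, ← Real.toNNReal_add hs ht] at hsum

theorem hasLaw_sum_mul_pi_gaussianReal {ι : Type*} [Fintype ι] (s : ι → NNReal) (c : ι → ℝ) :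
    HasLaw (fun x => ∑ k, c k * x k) (gaussianReal 0 (∑ k, c k ^ 2 * s k).toNNReal)
      (Measure.pi fun k => gaussianReal 0 (s k)) := by
  set P := Measure.pi fun k => gaussianReal 0 (s k)
  have hcoord (k : ι) : HasLaw (fun x : ι → ℝ => c k * x k)
      (gaussianReal 0 (.mk (c k ^ 2) (sq_nonneg _) * s k)) P := by
    simpa only [mul_zero] using
      gaussianReal_const_mul (measurePreserving_eval (fun k => gaussianReal 0 (s k)) k).hasLaw (c k)
  have hindep : iIndepFun (fun k (x : ι → ℝ) => c k * x k) P :=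
    iIndepFun_pi (X := fun k t => c k * t) fun k => by fun_prop
  have hgauss := hindep.hasGaussianLaw_fun_sum fun k => (hcoord k).hasGaussianLaw
  have hmean : ∫ x, ∑ k, c k * x k ∂P = 0 := by
    rw [integral_finsetSum _ fun k _ => (hcoord k).hasGaussianLaw.integrable]
    exact Finset.sum_eq_zero fun k _ => by rw [(hcoord k).integral_eq, integral_id_gaussianReal]
  have hvar : Var[fun x => ∑ k, c k * x k; P] = ∑ k, c k ^ 2 * s k := by
    rw [← Finset.sum_fn, variance_sum_pi (X := fun k t => c k * t)
      fun k => IsGaussian.memLp_two_id.const_mul (c k)]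
    exact Finset.sum_congr rfl fun k _ => by rw [variance_const_mul, variance_fun_id_gaussianReal]
  exact ⟨hgauss.aemeasurable, by rw [hgauss.map_eq_gaussianReal, hmean, hvar]⟩

theorem hasLaw_dotProduct_pi_gaussianReal {ι : Type*} [Fintype ι] (w : ι → ℝ) :
    HasLaw (fun x => w ⬝ᵥ x) (gaussianReal 0 (w ⬝ᵥ w).toNNReal)
      (Measure.pi fun _ : ι => gaussianReal 0 1) := by
  simpa only [dotProduct, sq, NNReal.coe_one, mul_one] using
    hasLaw_sum_mul_pi_gaussianReal (fun _ => 1) w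

end GaussianLaws

section SymmetricMatrices

variable {ι R : Type*} [Fintype ι] [CommSemiring R]

theorem exists_forall_eq_trace_mul (L : Matrix ι ι R →ₗ[R] R) :
    ∃ B : Matrix ι ι R, ∀ M, L M = (B * M).trace := by
  classical
  refine ⟨Matrix.of fun i j => L (Matrix.single j i 1), fun M => ?_⟩
  conv_lhs => rw [Matrix.matrix_eq_sum_single M]
  have hentry (i j : ι) : L (Matrix.single i j (M i j)) = L (Matrix.single i j 1) * M i j := by
    rw [mul_comm, ← smul_eq_mul, ← map_smul, Matrix.smul_single, smul_eq_mul, mul_one]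
  simp only [map_sum, hentry, Matrix.trace, Matrix.diag, Matrix.mul_apply, Matrix.of_apply]
  exact Finset.sum_comm

theorem exists_isSymm_forall_eq_trace_mul [Invertible (2 : R)] (L : Matrix ι ι R →ₗ[R] R) :
    ∃ A : Matrix ι ι R, A.IsSymm ∧ ∀ M, M.IsSymm → L M = (A * M).trace := by
  obtain ⟨B, hB⟩ := exists_forall_eq_trace_mul L
  refine ⟨(⅟2 : R) • (B + B.transpose), by simp [Matrix.IsSymm, add_comm], fun M hM => ?_⟩
  have htrace : (B.transpose * M).trace = (B * M).trace := by
    rw [← Matrix.trace_transpose, Matrix.transpose_mul, Matrix.transpose_transpose, hM.eq,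
      Matrix.trace_mul_comm]
  rw [hB, Matrix.smul_mul, Matrix.trace_smul, Matrix.add_mul, Matrix.trace_add, htrace,
    ← two_mul, smul_eq_mul, invOf_mul_cancel_left]

theorem trace_mul_vecMulVec_add_transpose {A : Matrix ι ι R} (hA : A.IsSymm) (x y : ι → R) :
    (A * (Matrix.vecMulVec x y + Matrix.vecMulVec y x)).trace = 2 * (A.mulVec x ⬝ᵥ y) := by
  have hswap : A.mulVec y ⬝ᵥ x = A.mulVec x ⬝ᵥ y := by
    rw [dotProduct_comm, Matrix.dotProduct_mulVec, ← Matrix.mulVec_transpose, hA.eq]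
  rw [Matrix.mul_add, Matrix.trace_add, Matrix.mul_vecMulVec, Matrix.mul_vecMulVec,
    Matrix.trace_vecMulVec, Matrix.trace_vecMulVec, hswap, two_mul]

end SymmetricMatrices

section TupleSums

variable {α M : Type*} [AddCommMonoid M]

theorem vecCons_comp_decomposeFin_symm_succ {m : ℕ} (a : α) (y : Fin m → α) (p : Fin m)
    (τ : Equiv.Perm (Fin m)) :
    Matrix.vecCons a y ∘ Equiv.Perm.decomposeFin.symm (p.succ, τ) =
      Matrix.vecCons (y p) (Function.update y p a ∘ τ) := by
  ext1 k
  cases k using Fin.cases with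
  | zero => simp
  | succ k => by_cases h : τ k = p <;> simp [h, Equiv.swap_apply_of_ne_of_ne]

theorem sum_perm_vecCons {m : ℕ} (F : (Fin (m + 1) → α) → M) (a : α) (y : Fin m → α) :
    ∑ σ : Equiv.Perm (Fin (m + 1)), F (Matrix.vecCons a y ∘ σ) =
      ∑ τ : Equiv.Perm (Fin m), F (Matrix.vecCons a (y ∘ τ)) +
        ∑ p, ∑ τ : Equiv.Perm (Fin m),
          F (Matrix.vecCons (y p) (Function.update y p a ∘ τ)) := by
  have hzero (τ : Equiv.Perm (Fin m)) :
      Matrix.vecCons a y ∘ Equiv.Perm.decomposeFin.symm (0, τ) = Matrix.vecCons a (y ∘ τ) := by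
    ext1 k
    cases k using Fin.cases <;> simp
  rw [← Equiv.sum_comp Equiv.Perm.decomposeFin.symm, Fintype.sum_prod_type, Fin.sum_univ_succ]
  simp only [hzero, vecCons_comp_decomposeFin_symm_succ]

theorem sum_perm_fin_two (F : (Fin 2 → α) → M) (a b : α) :
    ∑ σ : Equiv.Perm (Fin 2), F (![a, b] ∘ σ) = F ![a, b] + F ![b, a] := by
  have hupdate : Function.update ![b] 0 a = ![a] := List.ofFn_inj.1 rfl
  simp [sum_perm_vecCons, hupdate]

theorem sum_perm_fin_three (F : (Fin 3 → α) → M) (a b c : α) :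
    ∑ σ : Equiv.Perm (Fin 3), F (![a, b, c] ∘ σ) =
      F ![a, b, c] + F ![a, c, b] + (F ![b, a, c] + F ![b, c, a]) +
        (F ![c, b, a] + F ![c, a, b]) := by
  have hupdate_zero : Function.update ![b, c] 0 a = ![a, c] := List.ofFn_inj.1 rfl
  have hupdate_one : Function.update ![b, c] 1 a = ![b, a] := List.ofFn_inj.1 rfl
  have htwo (d e f : α) := sum_perm_fin_two (fun y => F (Matrix.vecCons d y)) e f
  rw [sum_perm_vecCons, Fin.sum_univ_two, hupdate_zero, hupdate_one, htwo, htwo, htwo,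
    ← add_assoc]
  rfl

theorem sum_perm_fin_four (F : (Fin 4 → α) → M) (a b c d : α) :
    ∑ σ : Equiv.Perm (Fin 4), F (![a, b, c, d] ∘ σ) =
      ∑ τ : Equiv.Perm (Fin 3), F (Matrix.vecCons a (![b, c, d] ∘ τ)) +
      ∑ τ : Equiv.Perm (Fin 3), F (Matrix.vecCons b (![a, c, d] ∘ τ)) +
      ∑ τ : Equiv.Perm (Fin 3), F (Matrix.vecCons c (![b, a, d] ∘ τ)) +
      ∑ τ : Equiv.Perm (Fin 3), F (Matrix.vecCons d (![b, c, a] ∘ τ)) := by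
  have hupdate_zero : Function.update ![b, c, d] 0 a = ![a, c, d] := List.ofFn_inj.1 rfl
  have hupdate_one : Function.update ![b, c, d] 1 a = ![b, a, d] := List.ofFn_inj.1 rfl
  have hupdate_two : Function.update ![b, c, d] 2 a = ![b, c, a] := List.ofFn_inj.1 rfl
  rw [sum_perm_vecCons, Fin.sum_univ_three, hupdate_zero, hupdate_one, hupdate_two,
    ← add_assoc, ← add_assoc]
  rfl

theorem sum_fin_succ_arrow [Fintype α] {m : ℕ}
    (f : (Fin (m + 1) → α) → M) : ∑ x, f x = ∑ a, ∑ y, f (Matrix.vecCons a y) := by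
  rw [← (Fin.consEquiv fun _ => α).sum_comp, Fintype.sum_prod_type]
  rfl

theorem sum_fin_four_arrow [Fintype α] (f : (Fin 4 → α) → M) :
    ∑ x, f x = ∑ i, ∑ j, ∑ k, ∑ l, f ![i, j, k, l] := by
  simp only [sum_fin_succ_arrow, Fintype.sum_unique, Matrix.empty_eq]

end TupleSums

section MixedTensor

/-- The tensor `A ⊗ u ⊗ v` of order four. -/
def mixedTensor {ι R : Type*} [Mul R] (A : Matrix ι ι R) (u v : ι → R) (x : Fin 4 → ι) : R :=
  A (x 0) (x 1) * u (x 2) * v (x 3)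

theorem sum_perm_mixedTensor {ι R : Type*} [CommSemiring R] {A : Matrix ι ι R}
    (hA : A.IsSymm) (u v : ι → R) (i j k l : ι) :
    ∑ σ : Equiv.Perm (Fin 4), mixedTensor A u v (![i, j, k, l] ∘ σ) =
      2 * (A i j * (u k * v l + u l * v k) + A k l * (u i * v j + u j * v i)
        + A i k * (u j * v l + u l * v j) + A i l * (u j * v k + u k * v j)
        + A j k * (u i * v l + u l * v i) + A j l * (u i * v k + u k * v i)) := by
  have hthree (a b c d : ι) :=
    sum_perm_fin_three (fun y => mixedTensor A u v (Matrix.vecCons a y)) b c d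
  rw [sum_perm_fin_four, hthree, hthree, hthree, hthree]
  simp only [mixedTensor, Matrix.cons_val]
  rw [hA.apply i j, hA.apply i k, hA.apply i l, hA.apply j k, hA.apply j l, hA.apply k l]
  ring

variable {ι R : Type*} [Fintype ι] [CommSemiring R]

/-- Half the contraction, against `u ⊗ v` in the last two slots, of the sum of the 24 slot
permutations of `A ⊗ u ⊗ v` for a symmetric matrix `A`. -/
def mixedCovariance (A : Matrix ι ι R) (u v : ι → R) : Matrix ι ι R :=
  let a := A.mulVec u
  let b := A.mulVec v
  ((u ⬝ᵥ u) * (v ⬝ᵥ v) + (u ⬝ᵥ v) ^ 2) • A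
    + (b ⬝ᵥ u) • (Matrix.vecMulVec v u + Matrix.vecMulVec u v)
    + (Matrix.vecMulVec u ((v ⬝ᵥ v) • a + (u ⬝ᵥ v) • b)
      + Matrix.vecMulVec ((v ⬝ᵥ v) • a + (u ⬝ᵥ v) • b) u)
    + (Matrix.vecMulVec v ((u ⬝ᵥ v) • a + (u ⬝ᵥ u) • b)
      + Matrix.vecMulVec ((u ⬝ᵥ v) • a + (u ⬝ᵥ u) • b) v)

theorem mulVec_dotProduct_eq_sum_sum (A : Matrix ι ι R) (u v : ι → R) :
    A.mulVec v ⬝ᵥ u = ∑ k, ∑ l, A k l * (u k * v l) := by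
  simp only [dotProduct, Matrix.mulVec, Finset.sum_mul]
  exact Finset.sum_congr rfl fun k _ => Finset.sum_congr rfl fun l _ => by ring

theorem sum_mul_sum_perm_mixedTensor {A : Matrix ι ι R} (hA : A.IsSymm) (u v : ι → R)
    (i j : ι) :
    ∑ k, ∑ l, u k * v l * ∑ σ : Equiv.Perm (Fin 4), mixedTensor A u v (![i, j, k, l] ∘ σ) =
      2 * mixedCovariance A u v i j := by
  set a := A.mulVec u with ha
  set b := A.mulVec v with hb
  calc ∑ k, ∑ l, u k * v l * ∑ σ : Equiv.Perm (Fin 4), mixedTensor A u v (![i, j, k, l] ∘ σ)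
      = 2 * (A i j * ((u ⬝ᵥ u) * (v ⬝ᵥ v) + (u ⬝ᵥ v) * (u ⬝ᵥ v))
          + (u i * v j + u j * v i) * (b ⬝ᵥ u)
          + u j * (a i * (v ⬝ᵥ v) + (u ⬝ᵥ v) * b i) + v j * (a i * (u ⬝ᵥ v) + (u ⬝ᵥ u) * b i)
          + u i * (a j * (v ⬝ᵥ v) + (u ⬝ᵥ v) * b j)
          + v i * (a j * (u ⬝ᵥ v) + (u ⬝ᵥ u) * b j)) := by
        simp only [sum_perm_mixedTensor hA, hb, mulVec_dotProduct_eq_sum_sum]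
        simp only [ha, dotProduct, Matrix.mulVec, Finset.sum_mul_sum]
        simp only [Finset.mul_sum, ← Finset.sum_add_distrib]
        refine Finset.sum_congr rfl fun k _ => Finset.sum_congr rfl fun l _ => ?_
        ring
    _ = 2 * mixedCovariance A u v i j := by
        simp only [mixedCovariance, Matrix.add_apply, Matrix.smul_apply, Matrix.vecMulVec_apply,
          Pi.add_apply, Pi.smul_apply, smul_eq_mul, ← ha, ← hb]
        ring

theorem trace_mul_mixedCovariance {A : Matrix ι ι R} (hA : A.IsSymm) (u v : ι → R) :
    (A * mixedCovariance A u v).trace =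
      ((u ⬝ᵥ u) * (v ⬝ᵥ v) + (u ⬝ᵥ v) ^ 2) * (A * A).trace + 2 * (A.mulVec v ⬝ᵥ u) ^ 2
        + 2 * ((v ⬝ᵥ v) * (A.mulVec u ⬝ᵥ A.mulVec u)
          + 2 * (u ⬝ᵥ v) * (A.mulVec u ⬝ᵥ A.mulVec v)
          + (u ⬝ᵥ u) * (A.mulVec v ⬝ᵥ A.mulVec v)) := by
  simp only [mixedCovariance, Matrix.mul_add A (_ + _), Matrix.mul_add A (_ • A),
    Matrix.mul_smul, Matrix.trace_add _ (A * (_ + _)),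
    Matrix.trace_add _ (_ • _), Matrix.trace_smul, trace_mul_vecMulVec_add_transpose hA,
    dotProduct_add, dotProduct_smul, smul_eq_mul, dotProduct_comm (A.mulVec v) (A.mulVec u)]
  ring

theorem sum_mixedTensor_mul_sum_perm {A : Matrix ι ι R} (hA : A.IsSymm) (u v : ι → R) :
    ∑ x, mixedTensor A u v x * ∑ σ : Equiv.Perm (Fin 4), mixedTensor A u v (x ∘ σ) =
      2 * (A * mixedCovariance A u v).trace := by
  have hsplit (i j k l : ι) : mixedTensor A u v ![i, j, k, l] = A i j * (u k * v l) := by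
    simp only [mixedTensor, Matrix.cons_val, mul_assoc]
  simp only [sum_fin_four_arrow, hsplit, mul_assoc (A _ _), ← Finset.mul_sum,
    sum_mul_sum_perm_mixedTensor hA]
  simp only [mul_left_comm _ (2 : R), ← Finset.mul_sum, Matrix.trace, Matrix.diag,
    Matrix.mul_apply]
  rw [Finset.sum_comm]
  simp only [hA.apply]

end MixedTensor

section RandomTensor

variable {n r : ℕ}

theorem tupleSym_comp_perm (x : Fin r → Fin n) (σ : Equiv.Perm (Fin r)) :
    tupleSym (x ∘ σ) = tupleSym x :=
  Subtype.ext (Multiset.coe_eq_coe.2 (Equiv.Perm.ofFn_comp_perm σ x))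

theorem exists_comp_perm_eq_of_tupleSym_eq {x y : Fin r → Fin n} (h : tupleSym y = tupleSym x) :
    ∃ σ : Equiv.Perm (Fin r), x ∘ σ = y := by
  have hperm : (List.ofFn (y ∘ Tuple.sort y)).Perm (List.ofFn (x ∘ Tuple.sort x)) := by
    refine Multiset.coe_eq_coe.1 (congrArg Subtype.val (?_ : tupleSym _ = tupleSym _))
    rw [tupleSym_comp_perm, tupleSym_comp_perm, h]
  have hsorted : y ∘ Tuple.sort y = x ∘ Tuple.sort x :=
    List.ofFn_injective <| hperm.eq_of_sortedLE (Tuple.monotone_sort y).sortedLE_ofFn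
      (Tuple.monotone_sort x).sortedLE_ofFn
  refine ⟨Tuple.sort x * (Tuple.sort y)⁻¹, ?_⟩
  rw [Equiv.Perm.coe_mul, ← Function.comp_assoc, ← hsorted, Function.comp_assoc,
    ← Equiv.Perm.coe_mul, mul_inv_cancel, Equiv.Perm.coe_one, Function.comp_id]

theorem permCount_eq_of_tupleSym_eq {x y : Fin r → Fin n} (h : tupleSym y = tupleSym x) :
    permCount y = permCount x := by
  rw [permCount, permCount, h]

theorem permCount_pos (x : Fin r → Fin n) : 0 < permCount x :=
  Finset.card_pos.2 ⟨x, by simp⟩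

theorem sum_perm_comp_eq_of_tupleSym_eq {M : Type*} [AddCommMonoid M] (T : (Fin r → Fin n) → M)
    {x y : Fin r → Fin n} (h : tupleSym y = tupleSym x) :
    ∑ σ : Equiv.Perm (Fin r), T (y ∘ σ) = ∑ σ : Equiv.Perm (Fin r), T (x ∘ σ) := by
  obtain ⟨τ, rfl⟩ := exists_comp_perm_eq_of_tupleSym_eq h
  exact Equiv.sum_comp (Equiv.mulLeft τ) fun σ => T (x ∘ σ)

theorem sum_filter_tupleSym_comp_perm {M : Type*} [AddCommMonoid M] (T : (Fin r → Fin n) → M)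
    (m : Sym (Fin n) r) (σ : Equiv.Perm (Fin r)) :
    ∑ y with tupleSym y = m, T (y ∘ σ) = ∑ y with tupleSym y = m, T y :=
  Finset.sum_equiv (σ.symm.arrowCongr (Equiv.refl _))
    (fun y => by
      simp only [Finset.mem_filter_univ]
      exact (tupleSym_comp_perm y σ).symm ▸ Iff.rfl)
    fun _ _ => rfl

theorem factorial_mul_sum_filter_tupleSym {R : Type*} [NonAssocSemiring R]
    (T : (Fin r → Fin n) → R) (x : Fin r → Fin n) :
    r.factorial * ∑ y with tupleSym y = tupleSym x, T y =
      permCount x * ∑ σ : Equiv.Perm (Fin r), T (x ∘ σ) := by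
  calc r.factorial * ∑ y with tupleSym y = tupleSym x, T y
      = ∑ σ : Equiv.Perm (Fin r), ∑ y with tupleSym y = tupleSym x, T (y ∘ σ) := by
        simp [sum_filter_tupleSym_comp_perm, Fintype.card_perm]
    _ = ∑ y with tupleSym y = tupleSym x, ∑ σ : Equiv.Perm (Fin r), T (y ∘ σ) := Finset.sum_comm
    _ = ∑ y with tupleSym y = tupleSym x, ∑ σ : Equiv.Perm (Fin r), T (x ∘ σ) :=
        Finset.sum_congr rfl fun y hy =>
          sum_perm_comp_eq_of_tupleSym_eq T (Finset.mem_filter_univ y |>.1 hy)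
    _ = permCount x * ∑ σ : Equiv.Perm (Fin r), T (x ∘ σ) := by
        rw [Finset.sum_const, nsmul_eq_mul, permCount]

theorem gote_comp_perm (ω : GoteSpace r n) (x : Fin r → Fin n) (σ : Equiv.Perm (Fin r)) :
    gote ω (x ∘ σ) = gote ω x := by
  rw [gote, gote, tupleSym_comp_perm, permCount_eq_of_tupleSym_eq (tupleSym_comp_perm x σ)]

/-- The coefficient of the Gaussian coordinate `ω m` in the pairing `∑ x, T x * gote ω x` of a
deterministic tensor `T` with a GOTE(r,n) tensor. -/
noncomputable def goteCoeff (T : (Fin r → Fin n) → ℝ) (m : Sym (Fin n) r) : ℝ :=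
  ∑ x with tupleSym x = m, T x * √(r / permCount x)

theorem sum_mul_gote (T : (Fin r → Fin n) → ℝ) (ω : GoteSpace r n) :
    ∑ x, T x * gote ω x = ∑ m, goteCoeff T m * ω m := by
  simp only [goteCoeff, Finset.sum_mul]
  rw [← Finset.sum_fiberwise Finset.univ tupleSym]
  refine Finset.sum_congr rfl fun m _ => Finset.sum_congr rfl fun x hx => ?_
  rw [gote, Finset.mem_filter_univ x |>.1 hx, mul_assoc]

theorem goteCoeff_tupleSym (T : (Fin r → Fin n) → ℝ) (x : Fin r → Fin n) :
    goteCoeff T (tupleSym x) =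
      √(r / permCount x) * (permCount x / r.factorial * ∑ σ : Equiv.Perm (Fin r), T (x ∘ σ)) := by
  have hsqrt : goteCoeff T (tupleSym x) =
      √(r / permCount x) * ∑ y with tupleSym y = tupleSym x, T y := by
    rw [goteCoeff, Finset.mul_sum]
    refine Finset.sum_congr rfl fun y hy => ?_
    rw [permCount_eq_of_tupleSym_eq (Finset.mem_filter_univ y |>.1 hy), mul_comm]
  rw [hsqrt, div_mul_eq_mul_div, ← factorial_mul_sum_filter_tupleSym,
    mul_div_cancel_left₀ _ (by positivity)]

theorem sum_goteCoeff_sq (T : (Fin r → Fin n) → ℝ) :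
    ∑ m, goteCoeff T m ^ 2 =
      r / r.factorial * ∑ x, T x * ∑ σ : Equiv.Perm (Fin r), T (x ∘ σ) := by
  calc ∑ m, goteCoeff T m ^ 2
      = ∑ x, T x * √(r / permCount x) * goteCoeff T (tupleSym x) := by
        rw [← Finset.sum_fiberwise Finset.univ tupleSym]
        refine Finset.sum_congr rfl fun m _ => ?_
        rw [sq, goteCoeff, Finset.sum_mul]
        exact Finset.sum_congr rfl fun x hx => by
          rw [Finset.mem_filter_univ x |>.1 hx, goteCoeff]
    _ = r / r.factorial * ∑ x, T x * ∑ σ : Equiv.Perm (Fin r), T (x ∘ σ) := by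
        rw [Finset.mul_sum]
        refine Finset.sum_congr rfl fun x _ => ?_
        have hcount : (permCount x : ℝ) ≠ 0 := by exact_mod_cast (permCount_pos x).ne'
        have hsqrt : √(r / permCount x) ^ 2 * (permCount x / r.factorial) =
            (r / r.factorial : ℝ) := by
          rw [Real.sq_sqrt (by positivity), div_mul_div_cancel₀ hcount]
        rw [goteCoeff_tupleSym, ← hsqrt]
        ring

theorem hasLaw_sum_mul_gote (T : (Fin r → Fin n) → ℝ) :
    HasLaw (fun ω => ∑ x, T x * gote ω x)
      (gaussianReal 0 (r / r.factorial *
        ∑ x, T x * ∑ σ : Equiv.Perm (Fin r), T (x ∘ σ)).toNNReal) (goteMeasure r n) := by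
  simpa only [goteMeasure, sum_mul_gote, ← sum_goteCoeff_sq, dotProduct, ← sq] using
    hasLaw_dotProduct_pi_gaussianReal (goteCoeff T)

end RandomTensor

section MixedContraction

variable {n : ℕ}

theorem mixedContraction_apply (ω : GoteSpace 4 n) (u v : Fin n → ℝ) (i j : Fin n) :
    mixedContraction ω u v i j = ∑ k, ∑ l, gote ω ![i, j, k, l] * u k * v l :=
  rfl

theorem mixedContraction_isSymm (ω : GoteSpace 4 n) (u v : Fin n → ℝ) :
    (mixedContraction ω u v).IsSymm := by
  refine Matrix.IsSymm.ext fun i j => ?_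
  have hswap (k l : Fin n) : ![j, i, k, l] = ![i, j, k, l] ∘ Equiv.swap 0 1 :=
    List.ofFn_inj.1 rfl
  simp only [mixedContraction_apply, hswap, gote_comp_perm]

theorem trace_mul_mixedContraction (A : Matrix (Fin n) (Fin n) ℝ) (u v : Fin n → ℝ)
    (ω : GoteSpace 4 n) :
    (A * mixedContraction ω u v).trace = ∑ x, mixedTensor A u v x * gote ω x := by
  rw [← (mixedContraction_isSymm ω u v).eq]
  simp only [sum_fin_four_arrow, Matrix.trace, Matrix.diag, Matrix.mul_apply,
    Matrix.transpose_apply, mixedContraction_apply, Finset.mul_sum]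
  refine Finset.sum_congr rfl fun i _ => Finset.sum_congr rfl fun j _ =>
    Finset.sum_congr rfl fun k _ => Finset.sum_congr rfl fun l _ => ?_
  simp only [mixedTensor, Matrix.cons_val]
  ring

/-- The variance of `tr (A (G·u⊗v))` for a GOTE(4,n) tensor `G`, a symmetric matrix `A` and unit
vectors `u`, `v`. -/
noncomputable def mixedVariance (A : Matrix (Fin n) (Fin n) ℝ) (u v : Fin n → ℝ) : ℝ :=
  1 / 3 * ((1 + (u ⬝ᵥ v) ^ 2) * (A * A).trace + 2 * (A.mulVec v ⬝ᵥ u) ^ 2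
    + 2 * (A.mulVec u ⬝ᵥ A.mulVec u + 2 * (u ⬝ᵥ v) * (A.mulVec u ⬝ᵥ A.mulVec v)
      + A.mulVec v ⬝ᵥ A.mulVec v))

theorem hasLaw_trace_mul_mixedContraction {A : Matrix (Fin n) (Fin n) ℝ} (hA : A.IsSymm)
    {u v : Fin n → ℝ} (hu : u ⬝ᵥ u = 1) (hv : v ⬝ᵥ v = 1) :
    HasLaw (fun ω => (A * mixedContraction ω u v).trace)
      (gaussianReal 0 (mixedVariance A u v).toNNReal) (goteMeasure 4 n) := by
  have hvar : mixedVariance A u v = (4 : ℕ) / (4 : ℕ).factorial * ∑ x, mixedTensor A u v x *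
      ∑ σ : Equiv.Perm (Fin 4), mixedTensor A u v (x ∘ σ) := by
    rw [sum_mixedTensor_mul_sum_perm hA, trace_mul_mixedCovariance hA, hu, hv, mixedVariance]
    norm_num [Nat.factorial]
    ring
  simpa only [trace_mul_mixedContraction, hvar] using hasLaw_sum_mul_gote (mixedTensor A u v)

theorem measurable_mixedContraction (u v : Fin n → ℝ) :
    Measurable fun ω : GoteSpace 4 n => fun i j => mixedContraction ω u v i j := by
  simp only [mixedContraction_apply, gote]
  fun_prop

end MixedContraction

section GaussianOrthogonalEnsemble

theorem sum_sum_eq_sum_subtype_le {α R : Type*} [Fintype α] [LinearOrder α] [NonAssocSemiring R]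
    (F : α → α → R) (hF : ∀ i j, F i j = F j i) :
    ∑ i, ∑ j, F i j =
      ∑ p : {p : α × α // p.1 ≤ p.2}, (if p.1.1 = p.1.2 then 1 else 2) * F p.1.1 p.1.2 := by
  have hlower : ∑ p : α × α with ¬p.1 ≤ p.2, F p.1 p.2 = ∑ p : α × α with p.1 < p.2, F p.1 p.2 :=
    Finset.sum_equiv (Equiv.prodComm α α) (by simp) fun p _ => hF p.1 p.2
  rw [← Finset.sum_subtype {p : α × α | p.1 ≤ p.2} (by simp)
      fun p => (if p.1 = p.2 then 1 else 2) * F p.1 p.2, ← Fintype.sum_prod_type',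
    ← Finset.sum_filter_add_sum_filter_not _ fun p : α × α => p.1 ≤ p.2, hlower]
  simp only [Finset.sum_filter, ← Finset.sum_add_distrib]
  refine Finset.sum_congr rfl fun p _ => ?_
  rcases lt_trichotomy p.1 p.2 with h | h | h
  · simp [h.le, h, h.ne, two_mul]
  · simp [h]
  · simp [h.not_ge, h.not_gt]

variable {n : ℕ}

theorem goeMatrix_isSymm (z : UpperIdx n → ℝ) : (goeMatrix z).IsSymm := by
  refine Matrix.IsSymm.ext fun i j => ?_
  rcases lt_trichotomy i j with h | rfl | h
  · simp [goeMatrix, h.le, h.not_ge]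
  · rfl
  · simp [goeMatrix, h.le, h.not_ge]

theorem goeMatrix_apply_upperIdx (z : UpperIdx n → ℝ) (p : UpperIdx n) :
    goeMatrix z p.1.1 p.1.2 = z p :=
  dif_pos p.2

theorem trace_mul_goeMatrix {A : Matrix (Fin n) (Fin n) ℝ} (hA : A.IsSymm) (z : UpperIdx n → ℝ) :
    (A * goeMatrix z).trace =
      ∑ p : UpperIdx n, (if p.1.1 = p.1.2 then 1 else 2) * A p.1.1 p.1.2 * z p := by
  have hsymm (i j : Fin n) : A i j * goeMatrix z j i = A j i * goeMatrix z i j := by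
    rw [hA.apply, (goeMatrix_isSymm z).apply]
  simp only [Matrix.trace, Matrix.diag, Matrix.mul_apply]
  rw [sum_sum_eq_sum_subtype_le _ hsymm]
  simp only [(goeMatrix_isSymm z).apply, goeMatrix_apply_upperIdx, mul_assoc]

theorem trace_mul_self_eq_sum_upperIdx {A : Matrix (Fin n) (Fin n) ℝ} (hA : A.IsSymm) :
    (A * A).trace = ∑ p : UpperIdx n, (if p.1.1 = p.1.2 then 1 else 2) * A p.1.1 p.1.2 ^ 2 := by
  have hsymm (i j : Fin n) : A i j ^ 2 = A j i ^ 2 := by rw [hA.apply]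
  rw [← sum_sum_eq_sum_subtype_le _ hsymm]
  simp only [Matrix.trace, Matrix.diag, Matrix.mul_apply, hA.apply, ← sq]

theorem hasLaw_trace_mul_goeMatrix {A : Matrix (Fin n) (Fin n) ℝ} (hA : A.IsSymm) :
    HasLaw (fun z => (A * goeMatrix z).trace) (gaussianReal 0 (2 * (A * A).trace).toNNReal)
      (goeMeasure n) := by
  have hvar : 2 * (A * A).trace = ∑ p : UpperIdx n,
      ((if p.1.1 = p.1.2 then 1 else 2) * A p.1.1 p.1.2) ^ 2 *
        ((if p.1.1 = p.1.2 then 2 else 1 : NNReal) : ℝ) := by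
    rw [trace_mul_self_eq_sum_upperIdx hA, Finset.mul_sum]
    refine Finset.sum_congr rfl fun p _ => ?_
    split_ifs <;> push_cast <;> ring
  simpa only [trace_mul_goeMatrix hA, hvar, goeMeasure] using
    hasLaw_sum_mul_pi_gaussianReal (fun p : UpperIdx n => if p.1.1 = p.1.2 then 2 else 1)
      fun p => (if p.1.1 = p.1.2 then 1 else 2) * A p.1.1 p.1.2

theorem measurable_goeMatrix_apply (i j : Fin n) :
    Measurable fun z : UpperIdx n → ℝ => goeMatrix z i j := by
  unfold goeMatrix
  split_ifs <;> fun_prop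

instance isProbabilityMeasure_goeMeasure : IsProbabilityMeasure (goeMeasure n) := by
  unfold goeMeasure
  infer_instance

end GaussianOrthogonalEnsemble

section LowRankRepresentation

variable {n : ℕ}

/-- The matrix `(1/√6)·(U(uvᵀ + vuᵀ) + (V₁uᵀ + uV₁ᵀ) + (V₂vᵀ + vV₂ᵀ) + √(1+ρ²)·Z)` built from a
sample `a = (U, (V₁, W), z)`, where `ρ = ⟨u,v⟩`, `V₂ = ρV₁ + √(1-ρ²)W` and `z` lists the
upper-triangular entries of `Z`. -/
noncomputable def lowRankMatrix (u v : Fin n → ℝ)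
    (a : ℝ × ((Fin n → ℝ) × (Fin n → ℝ)) × (UpperIdx n → ℝ)) : Matrix (Fin n) (Fin n) ℝ :=
  let V₁ := a.2.1.1
  let V₂ := (u ⬝ᵥ v) • V₁ + √(1 - (u ⬝ᵥ v) ^ 2) • a.2.1.2
  (1 / √6) • (a.1 • (Matrix.vecMulVec v u + Matrix.vecMulVec u v)
    + (Matrix.vecMulVec u V₁ + Matrix.vecMulVec V₁ u)
    + (Matrix.vecMulVec v V₂ + Matrix.vecMulVec V₂ v)
    + √(1 + (u ⬝ᵥ v) ^ 2) • goeMatrix a.2.2)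

theorem lowRankMatrix_apply (u v : Fin n → ℝ)
    (a : ℝ × ((Fin n → ℝ) × (Fin n → ℝ)) × (UpperIdx n → ℝ)) (i j : Fin n) :
    lowRankMatrix u v a i j =
      (1 / √6) * a.1 * (u i * v j + v i * u j)
        + (1 / √6) * (a.2.1.1 i * u j + u i * a.2.1.1 j
          + ((u ⬝ᵥ v) * a.2.1.1 i + √(1 - (u ⬝ᵥ v) ^ 2) * a.2.1.2 i) * v j
          + v i * ((u ⬝ᵥ v) * a.2.1.1 j + √(1 - (u ⬝ᵥ v) ^ 2) * a.2.1.2 j))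
        + (1 / √6) * √(1 + (u ⬝ᵥ v) ^ 2) * goeMatrix a.2.2 i j := by
  simp only [lowRankMatrix, Matrix.smul_apply, Matrix.add_apply, Matrix.vecMulVec_apply,
    Pi.add_apply, Pi.smul_apply, smul_eq_mul]
  ring

theorem lowRankMatrix_isSymm (u v : Fin n → ℝ)
    (a : ℝ × ((Fin n → ℝ) × (Fin n → ℝ)) × (UpperIdx n → ℝ)) : (lowRankMatrix u v a).IsSymm := by
  refine Matrix.IsSymm.ext fun i j => ?_
  rw [lowRankMatrix_apply, lowRankMatrix_apply, (goeMatrix_isSymm a.2.2).apply]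
  ring

theorem measurable_lowRankMatrix (u v : Fin n → ℝ) :
    Measurable fun a => fun i j => lowRankMatrix u v a i j := by
  have := measurable_goeMatrix_apply (n := n)
  simp only [lowRankMatrix_apply]
  fun_prop

theorem trace_mul_lowRankMatrix {A : Matrix (Fin n) (Fin n) ℝ} (hA : A.IsSymm) (u v : Fin n → ℝ)
    (a : ℝ × ((Fin n → ℝ) × (Fin n → ℝ)) × (UpperIdx n → ℝ)) :
    (A * lowRankMatrix u v a).trace =
      1 / √6 * (2 * (A.mulVec v ⬝ᵥ u) * a.1
        + ((2 * ((A.mulVec u + (u ⬝ᵥ v) • A.mulVec v) ⬝ᵥ a.2.1.1)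
            + 2 * √(1 - (u ⬝ᵥ v) ^ 2) * (A.mulVec v ⬝ᵥ a.2.1.2))
          + √(1 + (u ⬝ᵥ v) ^ 2) * (A * goeMatrix a.2.2).trace)) := by
  simp only [lowRankMatrix, Matrix.mul_smul, Matrix.trace_smul, Matrix.mul_add A (_ + _),
    Matrix.mul_add A (_ • (_ + _)), Matrix.trace_add _ (A * (_ + _)),
    Matrix.trace_add _ (_ • _), trace_mul_vecMulVec_add_transpose hA, dotProduct_add,
    add_dotProduct, dotProduct_smul, smul_dotProduct, smul_eq_mul]
  ring

theorem sq_dotProduct_le_one {ι : Type*} [Fintype ι] {u v : ι → ℝ} (hu : u ⬝ᵥ u = 1)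
    (hv : v ⬝ᵥ v = 1) : (u ⬝ᵥ v) ^ 2 ≤ 1 := by
  calc (u ⬝ᵥ v) ^ 2 ≤ (u ⬝ᵥ u) * (v ⬝ᵥ v) := by
        simpa only [dotProduct, sq] using Finset.sum_mul_sq_le_sq_mul_sq Finset.univ u v
    _ = 1 := by rw [hu, hv, mul_one]

theorem mixedVariance_eq_lowRankMatrix_variance (A : Matrix (Fin n) (Fin n) ℝ) {u v : Fin n → ℝ}
    (hu : u ⬝ᵥ u = 1) (hv : v ⬝ᵥ v = 1) :
    mixedVariance A u v =
      (1 / √6) ^ 2 * ((2 * (A.mulVec v ⬝ᵥ u)) ^ 2 * 1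
        + (2 ^ 2 * ((A.mulVec u + (u ⬝ᵥ v) • A.mulVec v) ⬝ᵥ (A.mulVec u + (u ⬝ᵥ v) • A.mulVec v))
          + (2 * √(1 - (u ⬝ᵥ v) ^ 2)) ^ 2 * (A.mulVec v ⬝ᵥ A.mulVec v)
          + √(1 + (u ⬝ᵥ v) ^ 2) ^ 2 * (2 * (A * A).trace))) := by
  have hsix : √(6 : ℝ) ^ 2 = 6 := Real.sq_sqrt (by positivity)
  have hsub : √(1 - (u ⬝ᵥ v) ^ 2) ^ 2 = 1 - (u ⬝ᵥ v) ^ 2 :=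
    Real.sq_sqrt (sub_nonneg.2 (sq_dotProduct_le_one hu hv))
  have hadd : √(1 + (u ⬝ᵥ v) ^ 2) ^ 2 = 1 + (u ⬝ᵥ v) ^ 2 := Real.sq_sqrt (by positivity)
  simp only [mixedVariance, mul_pow, div_pow, one_pow, hsix, hsub, hadd, add_dotProduct,
    dotProduct_add, smul_dotProduct, dotProduct_smul, smul_eq_mul,
    dotProduct_comm (A.mulVec v) (A.mulVec u)]
  ring

theorem hasLaw_trace_mul_lowRankMatrix {A : Matrix (Fin n) (Fin n) ℝ} (hA : A.IsSymm)
    {u v : Fin n → ℝ} (hu : u ⬝ᵥ u = 1) (hv : v ⬝ᵥ v = 1) :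
    HasLaw (fun a => (A * lowRankMatrix u v a).trace)
      (gaussianReal 0 (mixedVariance A u v).toNNReal)
      ((gaussianReal 0 1).prod
        (((Measure.pi fun _ : Fin n => gaussianReal 0 1).prod
          (Measure.pi fun _ : Fin n => gaussianReal 0 1)).prod (goeMeasure n))) := by
  set w := A.mulVec u + (u ⬝ᵥ v) • A.mulVec v
  have hU : HasLaw (fun x : ℝ => 2 * (A.mulVec v ⬝ᵥ u) * x)
      (gaussianReal 0 ((2 * (A.mulVec v ⬝ᵥ u)) ^ 2 * 1).toNNReal) (gaussianReal 0 1) :=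
    hasLaw_const_mul_gaussianReal_toNNReal (by rw [Real.toNNReal_one]; exact HasLaw.id) _
  have hV := hasLaw_const_mul_gaussianReal_toNNReal (hasLaw_dotProduct_pi_gaussianReal w) 2
  have hW := hasLaw_const_mul_gaussianReal_toNNReal
    (hasLaw_dotProduct_pi_gaussianReal (A.mulVec v)) (2 * √(1 - (u ⬝ᵥ v) ^ 2))
  have hZ := hasLaw_const_mul_gaussianReal_toNNReal (hasLaw_trace_mul_goeMatrix hA)
    √(1 + (u ⬝ᵥ v) ^ 2)
  have hw_nonneg : 0 ≤ w ⬝ᵥ w := by simpa using dotProduct_self_star_nonneg w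
  have hAv_nonneg : 0 ≤ A.mulVec v ⬝ᵥ A.mulVec v := by
    simpa using dotProduct_self_star_nonneg (A.mulVec v)
  have htrace_nonneg : 0 ≤ (A * A).trace := by
    simpa only [Matrix.conjTranspose_eq_transpose_of_trivial, hA.eq] using
      (Matrix.posSemidef_conjTranspose_mul_self A).trace_nonneg
  have hVW := hasLaw_add_prod_gaussianReal_toNNReal hV hW (by positivity) (by positivity)
  have hVWZ := hasLaw_add_prod_gaussianReal_toNNReal hVW hZ (by positivity) (by positivity)
  have hsum := hasLaw_add_prod_gaussianReal_toNNReal hU hVWZ (by positivity) (by positivity)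
  simpa only [trace_mul_lowRankMatrix hA, mixedVariance_eq_lowRankMatrix_variance A hu hv] using
    hasLaw_const_mul_gaussianReal_toNNReal hsum (1 / √6)

end LowRankRepresentation

/-- **Low-rank representation of a mixed contraction of GOTE(4,n).**
With `ρ = ⟨u,v⟩`, the mixed contraction `G·u⊗v` has the same law as
`(1/√6)·U(uvᵀ + vuᵀ) + (1/√6)(V₁uᵀ + uV₁ᵀ + V₂vᵀ + vV₂ᵀ) + (1/√6)√(1+ρ²)·Z`,
where `U` is a standard Gaussian, `V₁, W` are independent standard Gaussian vectors,
`V₂ = ρV₁ + √(1−ρ²)W`, and `Z` is a GOE(n) matrix, all mutually independent. -/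
theorem mixed_contraction_low_rank_representation
    (n : ℕ) (hn : 1 ≤ n) (u v : Fin n → ℝ)
    (hu : ∑ i, u i ^ 2 = 1) (hv : ∑ i, v i ^ 2 = 1) :
    Measure.map (fun ω => fun i j => mixedContraction ω u v i j) (goteMeasure 4 n)
      = Measure.map
          (fun a : ℝ × ((Fin n → ℝ) × (Fin n → ℝ)) × (UpperIdx n → ℝ) => fun i j =>
            (1 / Real.sqrt 6) * a.1 * (u i * v j + v i * u j)
              + (1 / Real.sqrt 6) *
                  (a.2.1.1 i * u j + u i * a.2.1.1 j
                    + ((∑ k, u k * v k) * a.2.1.1 i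
                        + Real.sqrt (1 - (∑ k, u k * v k) ^ 2) * a.2.1.2 i) * v j
                    + v i * ((∑ k, u k * v k) * a.2.1.1 j
                        + Real.sqrt (1 - (∑ k, u k * v k) ^ 2) * a.2.1.2 j))
              + (1 / Real.sqrt 6) * Real.sqrt (1 + (∑ k, u k * v k) ^ 2) * goeMatrix a.2.2 i j)
          ((gaussianReal 0 1).prod
            (((Measure.pi fun _ : Fin n => gaussianReal 0 1).prod
                (Measure.pi fun _ : Fin n => gaussianReal 0 1)).prod (goeMeasure n))) := by
  have hu' : u ⬝ᵥ u = 1 := by simpa only [dotProduct, sq] using hu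
  have hv' : v ⬝ᵥ v = 1 := by simpa only [dotProduct, sq] using hv
  suffices h : (goteMeasure 4 n).map (fun ω i j => mixedContraction ω u v i j) =
      Measure.map (fun a i j => lowRankMatrix u v a i j) _ by
    simpa only [lowRankMatrix_apply, dotProduct] using h
  refine map_eq_map_of_forall_dual (measurable_mixedContraction u v)
    (measurable_lowRankMatrix u v) fun L => ?_
  obtain ⟨A, hA, hL⟩ := exists_isSymm_forall_eq_trace_mul (ι := Fin n) L.toLinearMap
  have hleft : (L ∘ fun ω i j => mixedContraction ω u v i j) =
      fun ω => (A * mixedContraction ω u v).trace :=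
    funext fun ω => hL _ (mixedContraction_isSymm ω u v)
  have hright : (L ∘ fun a i j => lowRankMatrix u v a i j) =
      fun a => (A * lowRankMatrix u v a).trace :=
    funext fun a => hL _ (lowRankMatrix_isSymm u v a)
  rw [hleft, hright, (hasLaw_trace_mul_mixedContraction hA hu' hv').map_eq,
    (hasLaw_trace_mul_lowRankMatrix hA hu' hv').map_eq]
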